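/- Let n ≥ 1, let r : ℝ → ℝ be continuously differentiable, let ρ be an n × n Hermitian positive-definite complex matrix and let δ be an n × n Hermitian complex matrix. Then the function t ↦ trace(r(ρ + t δ)) (defined via the continuous functional calculus applied to the Hermitian matrix ρ + t δ, for t in a neighborhood of 0 small enough that ρ + t δ is positive definite) is differentiable at t = 0, and its derivative at 0 equals trace(r'(ρ) * δ), where r'(ρ) is the functional calculus of the derivative r' applied to ρ. -/

import Mathlib

open Matrix
open scoped ComplexOrder

/-!
For a polynomial `p` and a bounded functional `τ` with `τ (x * y) = τ (y * x)`, cyclicity collapses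
the noncommutative Leibniz rule to `d(τ ∘ p)(a) h = τ (p'(a) * h)`. A `C¹` function is the limit of
polynomials uniformly on compact intervals together with its derivative, and the functional calculus
is isometric, so both sides converge uniformly on bounded sets of self-adjoint elements; the formula
passes to the limit.
-/

section PolynomialApproximation

open Filter Polynomial Set

theorem polynomial_derivative_surjective {K : Type*} [Field K] [CharZero K] :
    Function.Surjective (derivative : K[X] → K[X]) := by
  intro p
  induction p using Polynomial.induction_on' with
  | add p q hp hq =>
    obtain ⟨P, rfl⟩ := hp
    obtain ⟨Q, rfl⟩ := hq
    exact ⟨P + Q, derivative_add⟩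
  | monomial n c =>
    refine ⟨monomial (n + 1) (c / (n + 1)), ?_⟩
    rw [derivative_monomial, Nat.cast_add_one, div_mul_cancel₀ c n.cast_add_one_ne_zero,
      Nat.add_sub_cancel]

theorem exists_polynomial_near_of_hasDerivWithinAt {a b : ℝ} {f f' : ℝ → ℝ}
    (hf : ∀ x ∈ Icc a b, HasDerivWithinAt f (f' x) (Icc a b) x)
    (hf' : ContinuousOn f' (Icc a b)) {ε : ℝ} (hε : 0 < ε) :
    ∃ p : ℝ[X], ∀ x ∈ Icc a b,
      |p.eval x - f x| < ε ∧ |p.derivative.eval x - f' x| < ε := by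
  set η := ε / (|b - a| + 1)
  have hη : 0 < η := by positivity
  have hηε : η * |b - a| + η = ε := by
    rw [← mul_add_one]
    exact div_mul_cancel₀ _ (by positivity)
  obtain ⟨q, hq⟩ := exists_polynomial_near_of_continuousOn a b f' hf' η hη
  obtain ⟨Q, rfl⟩ := polynomial_derivative_surjective q
  refine ⟨Q + C (f a - Q.eval a), fun x hx => ⟨?_, ?_⟩⟩
  · have hmean : |(Q.eval x - f x) - (Q.eval a - f a)| ≤ η * (x - a) :=
      norm_image_sub_le_of_norm_deriv_le_segment'
        (fun y hy => (Q.hasDerivAt y).hasDerivWithinAt.sub (hf y hy))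
        (fun y hy => (hq y (Ico_subset_Icc_self hy)).le) x hx
    have hxa : x - a ≤ |b - a| := (sub_le_sub_right hx.2 a).trans (le_abs_self _)
    calc |(Q + C (f a - Q.eval a)).eval x - f x|
        = |(Q.eval x - f x) - (Q.eval a - f a)| := by rw [eval_add, eval_C]; ring_nf
      _ ≤ η * |b - a| := hmean.trans (by gcongr)
      _ < ε := by linarith
  · calc |(Q + C (f a - Q.eval a)).derivative.eval x - f' x|
        = |Q.derivative.eval x - f' x| := by rw [derivative_add, derivative_C, add_zero]
      _ < η := hq x hx
      _ ≤ ε := hηε ▸ le_add_of_nonneg_left (by positivity)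

theorem exists_polynomial_tendstoUniformlyOn_Icc {r r' : ℝ → ℝ} {a b : ℝ}
    (hr : ∀ x ∈ Icc a b, HasDerivWithinAt r (r' x) (Icc a b) x)
    (hr' : ContinuousOn r' (Icc a b)) :
    ∃ p : ℕ → ℝ[X], TendstoUniformlyOn (fun n => (p n).eval) r atTop (Icc a b) ∧
      TendstoUniformlyOn (fun n => (p n).derivative.eval) r' atTop (Icc a b) := by
  choose p hp using fun n : ℕ => exists_polynomial_near_of_hasDerivWithinAt hr hr'
    (Nat.one_div_pos_of_nat (α := ℝ) (n := n))
  have hsmall : ∀ ε > (0 : ℝ), ∀ᶠ n : ℕ in atTop, 1 / ((n : ℝ) + 1) < ε := fun ε hε =>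
    tendsto_one_div_add_atTop_nhds_zero_nat.eventually_lt_const hε
  simp only [Metric.tendstoUniformlyOn_iff, dist_comm (r _), dist_comm (r' _), Real.dist_eq]
  exact ⟨p, fun ε hε => (hsmall ε hε).mono fun n hn x hx => (hp n x hx).1.trans hn,
    fun ε hε => (hsmall ε hε).mono fun n hn x hx => (hp n x hx).2.trans hn⟩

end PolynomialApproximation

section TracialFunctional

open Filter Metric Polynomial Set

section Polynomial

variable {𝕜 A F : Type*} [NontriviallyNormedField 𝕜] [NormedRing A] [NormedAlgebra 𝕜 A]
  [NormedAddCommGroup F] [NormedSpace 𝕜 F]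

theorem hasFDerivAt_tracial_pow (τ : A →L[𝕜] F) (hτ : ∀ x y, τ (x * y) = τ (y * x)) (n : ℕ)
    (a : A) :
    HasFDerivAt (fun x => τ (x ^ n)) (n • (τ ∘L .mul 𝕜 A (a ^ (n - 1)))) a := by
  refine (τ.hasFDerivAt.comp a (hasFDerivAt_pow' (𝕜 := 𝕜) n)).congr_fderiv ?_
  ext h
  have hcycle : ∀ i ∈ Finset.range n,
      τ (a ^ (n - 1 - i) * h * a ^ i) = τ (a ^ (n - 1) * h) := fun i hi => by
    rw [hτ, ← mul_assoc, ← pow_add, Nat.add_sub_of_le (by grind)]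
  simp [Finset.sum_congr rfl hcycle]

theorem hasFDerivAt_tracial_aeval (τ : A →L[𝕜] F) (hτ : ∀ x y, τ (x * y) = τ (y * x))
    (p : 𝕜[X]) (a : A) :
    HasFDerivAt (fun x => τ (aeval x p)) (τ ∘L .mul 𝕜 A (aeval a p.derivative)) a := by
  induction p using Polynomial.induction_on' with
  | add p q hp hq => simpa only [map_add, ContinuousLinearMap.comp_add] using hp.fun_add hq
  | monomial n c =>
    simp only [derivative_monomial, aeval_monomial, ← Algebra.smul_def, map_smul, mul_smul,
      Nat.cast_smul_eq_nsmul, ContinuousLinearMap.comp_smul, map_nsmul]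
    exact (hasFDerivAt_tracial_pow τ hτ n a).const_smul c

end Polynomial

variable {A F : Type*} [NormedRing A] [StarRing A] [NormedAlgebra ℝ A]
  [IsometricContinuousFunctionalCalculus ℝ A IsSelfAdjoint]

theorem spectrum_subset_Icc_of_isSelfAdjoint {a : A} (ha : IsSelfAdjoint a) :
    spectrum ℝ a ⊆ Icc (-‖a‖) ‖a‖ := fun x hx =>
  abs_le.1 <| by simpa [cfc_id ℝ a] using! norm_apply_le_norm_cfc (id : ℝ → ℝ) a hx

theorem tendstoUniformlyOn_cfc {ι : Type*} {l : Filter ι} {f : ι → ℝ → ℝ} {g : ℝ → ℝ}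
    {K : Set ℝ} (hf : ∀ i, ContinuousOn (f i) K) (hg : ContinuousOn g K)
    (hfg : TendstoUniformlyOn f g l K) {s : Set A} (hs : ∀ a ∈ s, spectrum ℝ a ⊆ K) :
    TendstoUniformlyOn (fun i => cfc (f i)) (cfc g) l s := by
  rw [tendstoUniformlyOn_iff] at hfg ⊢
  intro ε hε
  filter_upwards [hfg ε hε] with i hi a ha
  rw [dist_eq_norm, ← cfc_sub g (f i) a (hg.mono (hs a ha)) ((hf i).mono (hs a ha))]
  exact norm_cfc_lt hε fun x hx => hi x (hs a ha hx)

theorem exists_polynomial_tendstoUniformlyOn_cfc {r : ℝ → ℝ} (hr : ContDiff ℝ 1 r) (R : ℝ) :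
    ∃ p : ℕ → ℝ[X],
      TendstoUniformlyOn (fun n (x : A) => aeval x (p n)) (cfc r) atTop
        {x | IsSelfAdjoint x ∧ ‖x‖ ≤ R} ∧
      TendstoUniformlyOn (fun n (x : A) => aeval x (p n).derivative) (cfc (deriv r)) atTop
        {x | IsSelfAdjoint x ∧ ‖x‖ ≤ R} := by
  obtain ⟨p, hp, hp'⟩ := exists_polynomial_tendstoUniformlyOn_Icc (a := -R) (b := R)
    (fun x _ => (hr.differentiable one_ne_zero x).hasDerivAt.hasDerivWithinAt)
    hr.continuous_deriv_one.continuousOn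
  have hspec : ∀ x ∈ {x : A | IsSelfAdjoint x ∧ ‖x‖ ≤ R}, spectrum ℝ x ⊆ Icc (-R) R :=
    fun x ⟨hx, hxR⟩ =>
      (spectrum_subset_Icc_of_isSelfAdjoint hx).trans (Icc_subset_Icc (neg_le_neg hxR) hxR)
  have transfer {q : ℕ → ℝ[X]} {g : ℝ → ℝ} (hg : Continuous g)
      (hq : TendstoUniformlyOn (fun n => (q n).eval) g atTop (Icc (-R) R)) :
      TendstoUniformlyOn (fun n (x : A) => aeval x (q n)) (cfc g) atTop
        {x | IsSelfAdjoint x ∧ ‖x‖ ≤ R} :=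
    (tendstoUniformlyOn_cfc (fun n => (q n).continuousOn) hg.continuousOn hq hspec).congr <|
      .of_forall fun n x hx => cfc_polynomial (q n) x hx.1
  exact ⟨p, transfer hr.continuous hp, transfer hr.continuous_deriv_one hp'⟩

variable [StarModule ℝ A] [NormedAddCommGroup F] [NormedSpace ℝ F]

theorem hasFDerivAt_tracial_cfc (τ : A →L[ℝ] F) (hτ : ∀ x y, τ (x * y) = τ (y * x))
    {r : ℝ → ℝ} (hr : ContDiff ℝ 1 r) (a : selfAdjoint.submodule ℝ A) :
    HasFDerivAt (fun x : selfAdjoint.submodule ℝ A => τ (cfc r (x : A)))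
      (τ ∘L .mul ℝ A (cfc (deriv r) (a : A)) ∘L (selfAdjoint.submodule ℝ A).subtypeL) a := by
  let ι := (selfAdjoint.submodule ℝ A).subtypeL
  -- `D b` is the functional `h ↦ τ (b * h)`; `D` is bounded linear in `b`, so it preserves uniform
  -- convergence.
  let D : A →L[ℝ] selfAdjoint.submodule ℝ A →L[ℝ] F :=
    .compL ℝ _ A F τ ∘L (ContinuousLinearMap.compL ℝ _ A A).flip ι ∘L .mul ℝ A
  obtain ⟨p, hp, hp'⟩ := exists_polynomial_tendstoUniformlyOn_cfc (A := A) hr (‖a‖ + 1)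
  have hball : ball 0 (‖a‖ + 1) ⊆ ι ⁻¹' {x | IsSelfAdjoint x ∧ ‖x‖ ≤ ‖a‖ + 1} :=
    fun x hx => ⟨x.2, (mem_ball_zero_iff.1 hx).le⟩
  have hderiv (n : ℕ) (x : selfAdjoint.submodule ℝ A) :
      HasFDerivAt (fun x => τ (aeval (ι x) (p n))) (D (aeval (ι x) (p n).derivative)) x :=
    (hasFDerivAt_tracial_aeval τ hτ (p n) (x : A)).comp x ι.hasFDerivAt
  exact hasFDerivAt_of_tendstoUniformlyOn (g' := fun x => D (cfc (deriv r) (ι x))) isOpen_ball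
    (D.uniformContinuous.comp_tendstoUniformlyOn ((hp'.comp ι).mono hball))
    (fun n x _ => hderiv n x)
    (fun x hx => (τ.continuous.tendsto _).comp (hp.tendsto_at (hball hx)))
    (by simp only [mem_ball_zero_iff, lt_add_one])

theorem trace_cfc_hasDerivAt_general (τ : A →L[ℝ] F) (hτ : ∀ x y, τ (x * y) = τ (y * x))
    {r : ℝ → ℝ} (hr : ContDiff ℝ 1 r) {a d : A} (ha : IsSelfAdjoint a) (hd : IsSelfAdjoint d) :
    HasDerivAt (fun t : ℝ => τ (cfc r (a + t • d))) (τ (cfc (deriv r) a * d)) 0 := by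
  let a' : selfAdjoint.submodule ℝ A := ⟨a, ha⟩
  let d' : selfAdjoint.submodule ℝ A := ⟨d, hd⟩
  have hline : HasDerivAt (fun t : ℝ => a' + t • d') d' 0 := by
    simpa only [one_smul] using ((hasDerivAt_id' (0 : ℝ)).smul_const d').const_add a'
  exact (hasFDerivAt_tracial_cfc τ hτ hr a').comp_hasDerivAt_of_eq 0 hline (by simp)

end TracialFunctional

/-- Finite-dimensional version of the Gâteaux differentiability of `ρ ↦ tr r(ρ)`:
for a continuously differentiable `r : ℝ → ℝ`, a Hermitian positive-definite matrix
`ρ` and a Hermitian matrix `δ`, the map `t ↦ tr r(ρ + t δ)` (defined via the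
continuous functional calculus) is differentiable at `t = 0` with derivative
`tr (r'(ρ) δ)`. -/
theorem trace_cfc_hasDerivAt (n : ℕ) (hn : 1 ≤ n) (r : ℝ → ℝ)
    (hr : ContDiff ℝ 1 r)
    (ρ δ : Matrix (Fin n) (Fin n) ℂ) (hρ : ρ.PosDef) (hδ : δ.IsHermitian) :
    HasDerivAt (fun t : ℝ => (cfc r (ρ + t • δ)).trace)
      ((cfc (deriv r) ρ * δ).trace) 0 := by
  open scoped Matrix.Norms.L2Operator in
  exact trace_cfc_hasDerivAt_general (traceLinearMap (Fin n) ℝ ℂ).toContinuousLinearMap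
    trace_mul_comm hr hρ.isHermitian hδ
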